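/- arXiv:math/0312087 — 2 statements merged into one kernel-verified Lean document; each statement's English description precedes it below -/
import Mathlib

section
/- Let R be a commutative Noetherian ring, let d be a natural number, and suppose that R has injective dimension at most d as a module over itself. Then every R-module M of finite flat dimension has projective dimension at most d. -/
/-!
If `R` is a commutative Noetherian ring of injective dimension at most `d` as a module
over itself, then every `R`-module of finite flat dimension has projective dimension
at most `d`.
-/

universe u

open CategoryTheory

/-- `M` has flat dimension at most `n`: there is an exact sequence
`0 → F_n → ⋯ → F_0 → M → 0` with every `F_i` flat (encoded as a flat resolution
which vanishes in degrees `> n`). -/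
def HasFlatDimLE (R : Type u) [CommRing R] (M : Type u) [AddCommGroup M] [Module R M]
    (n : ℕ) : Prop :=
  ∃ (F : ℕ → ModuleCat.{u} R) (d : ∀ i : ℕ, F (i + 1) →ₗ[R] F i) (ε : F 0 →ₗ[R] M),
    (∀ i, Module.Flat R (F i)) ∧ (∀ i, n < i → Subsingleton (F i)) ∧
    Function.Surjective ε ∧ LinearMap.range (d 0) = LinearMap.ker ε ∧
    ∀ i, LinearMap.range (d (i + 1)) = LinearMap.ker (d i)

/-- `M` has projective dimension at most `n`: there is an exact sequence
`0 → P_n → ⋯ → P_0 → M → 0` with every `P_i` projective. -/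
def HasProjDimLE (R : Type u) [CommRing R] (M : Type u) [AddCommGroup M] [Module R M]
    (n : ℕ) : Prop :=
  ∃ (P : ℕ → ModuleCat.{u} R) (d : ∀ i : ℕ, P (i + 1) →ₗ[R] P i) (ε : P 0 →ₗ[R] M),
    (∀ i, Module.Projective R (P i)) ∧ (∀ i, n < i → Subsingleton (P i)) ∧
    Function.Surjective ε ∧ LinearMap.range (d 0) = LinearMap.ker ε ∧
    ∀ i, LinearMap.range (d (i + 1)) = LinearMap.ker (d i)

/-- `M` has injective dimension at most `n`: there is an exact sequence
`0 → M → I^0 → ⋯ → I^n → 0` with every `I^i` injective. -/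
def HasInjDimLE (R : Type u) [CommRing R] (M : Type u) [AddCommGroup M] [Module R M]
    (n : ℕ) : Prop :=
  ∃ (I : ℕ → ModuleCat.{u} R) (d : ∀ i : ℕ, I i →ₗ[R] I (i + 1)) (ι : M →ₗ[R] I 0),
    (∀ i, Module.Injective R (I i)) ∧ (∀ i, n < i → Subsingleton (I i)) ∧
    Function.Injective ι ∧ LinearMap.range ι = LinearMap.ker (d 0) ∧
    ∀ i, LinearMap.range (d i) = LinearMap.ker (d (i + 1))

/-!
Let `F` be flat. Over a Noetherian ring the tensor product of `F` with an injective module is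
injective, because `F ⊗ Hom(I, Q) ≃ Hom(I, F ⊗ Q)` for every ideal `I`. So tensoring an injective
coresolution of `R` with `F` gives one of `F`, and every flat module has injective dimension at
most `d`.

The syzygies `Kᵢ` of `F` are flat too, so `0 = Ext^(d+1)(F, K_(d+1)) = Ext^1(K_d, K_(d+1))` by
dimension shifting. Hence `0 → K_(d+1) → P_d → K_d → 0` splits, `K_d` is projective, and `F` has
projective dimension at most `d`. A module of finite flat dimension therefore has finite
projective dimension. The modules of finite projective dimension also form a class that is closed
under syzygies and whose members have injective dimension at most `d`, and the same splitting
argument applies to them.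
-/

open scoped TensorProduct

universe v w

section Syzygies

open Abelian Limits

variable {C : Type u} [Category.{v} C] [Abelian C]

/-- A class of objects is closed under syzygies if the kernel of every epimorphism from a
projective object onto a member of the class is again a member, so that dimension shifting
stays inside the class. The kernel is encoded as the left term of a short exact sequence. -/
def IsClosedUnderSyzygies (P : ObjectProperty C) : Prop :=
  ∀ ⦃S : ShortComplex C⦄, S.ShortExact → Projective S.X₂ → P S.X₃ → P S.X₁

lemma projective_X₃_of_extClass_eq_zero [HasExt.{w} C] {S : ShortComplex C} (hS : S.ShortExact)
    (h₂ : Projective S.X₂) (h : hS.extClass = 0) : Projective S.X₃ := by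
  obtain ⟨x, hx⟩ := Ext.covariant_sequence_exact₃ S.X₃ hS (Ext.mk₀ (𝟙 S.X₃)) (zero_add 1)
    (by rw [h, Ext.comp_zero])
  obtain ⟨s, rfl⟩ := Ext.homEquiv₀.symm.surjective x
  have hs : s ≫ S.g = 𝟙 S.X₃ := Ext.homEquiv₀.symm.injective (by simpa using hx)
  exact Retract.projective ⟨s, S.g, hs⟩

lemma subsingleton_ext_X₁_of_subsingleton_ext_X₃ [HasExt.{w} C] {S : ShortComplex C}
    (hS : S.ShortExact) (h₂ : Projective S.X₂) (Y : C) (n : ℕ)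
    (h₃ : Subsingleton (Ext S.X₃ Y (n + 2))) : Subsingleton (Ext S.X₁ Y (n + 1)) := by
  refine subsingleton_of_forall_eq 0 fun x₁ ↦ ?_
  obtain ⟨x₂, rfl⟩ := Ext.contravariant_sequence_exact₁ hS Y x₁ (n₁ := n + 2) (by lia)
    (Subsingleton.elim _ _)
  rw [x₂.eq_zero_of_hasProjectiveDimensionLT 1 (by lia), Ext.comp_zero]

lemma isClosedUnderSyzygies_finite_projectiveDimension :
    IsClosedUnderSyzygies fun X : C ↦ ∃ n, HasProjectiveDimensionLE X n := by
  rintro S hS h₂ ⟨n, h₃⟩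
  exact ⟨n, hS.hasProjectiveDimensionLT_X₁ (n + 1) inferInstance inferInstance⟩

variable [EnoughProjectives C]

lemma exists_shortExact_projective (X : C) :
    ∃ S : ShortComplex C, S.ShortExact ∧ Projective S.X₂ ∧ S.X₃ = X :=
  ⟨.mk (kernel.ι (Projective.π X)) (Projective.π X) (kernel.condition _),
    { exact := ShortComplex.exact_kernel _ }, inferInstanceAs (Projective (Projective.over X)), rfl⟩

theorem IsClosedUnderSyzygies.hasProjectiveDimensionLE [HasExt.{w} C] {P : ObjectProperty C}
    (hP : IsClosedUnderSyzygies P) {X : C} (hX : P X) {d : ℕ}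
    (hExt : ∀ Y, P Y → Subsingleton (Ext X Y (d + 1))) : HasProjectiveDimensionLE X d := by
  induction d generalizing X with
  | zero =>
    obtain ⟨S, hS, h₂, rfl⟩ := exists_shortExact_projective X
    have := hExt _ (hP hS h₂ hX)
    rw [← projective_iff_hasProjectiveDimensionLE_zero]
    exact projective_X₃_of_extClass_eq_zero hS h₂ (Subsingleton.elim _ _)
  | succ d ih =>
    obtain ⟨S, hS, h₂, rfl⟩ := exists_shortExact_projective X
    refine (hS.hasProjectiveDimensionLT_X₃_iff d h₂).2 ?_
    exact ih (hP hS h₂ hX) fun Y hY ↦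
      subsingleton_ext_X₁_of_subsingleton_ext_X₃ hS h₂ Y d (hExt Y hY)

theorem IsClosedUnderSyzygies.hasProjectiveDimensionLE_of_hasInjectiveDimensionLE
    {P : ObjectProperty C} (hP : IsClosedUnderSyzygies P) {d : ℕ}
    (hd : ∀ Y, P Y → HasInjectiveDimensionLE Y d) {X : C} (hX : P X) :
    HasProjectiveDimensionLE X d := by
  let := HasExt.standard C
  refine hP.hasProjectiveDimensionLE hX fun Y hY ↦ ?_
  have := hd Y hY
  exact HasInjectiveDimensionLT.subsingleton Y (d + 1) (d + 1) le_rfl X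

lemma hasInjectiveDimensionLE_of_hasProjectiveDimensionLE {d : ℕ}
    (hd : ∀ P : C, Projective P → HasInjectiveDimensionLE P d) {X : C} {n : ℕ}
    (hX : HasProjectiveDimensionLE X n) : HasInjectiveDimensionLE X d := by
  induction n generalizing X with
  | zero => exact hd X ((projective_iff_hasProjectiveDimensionLE_zero X).2 hX)
  | succ n ih =>
    obtain ⟨S, hS, h₂, rfl⟩ := exists_shortExact_projective X
    have h₁ := ih ((hS.hasProjectiveDimensionLT_X₃_iff n h₂).1 hX)
    exact hS.hasInjectiveDimensionLT_X₃ (d + 1) (hd _ h₂) inferInstance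

theorem hasProjectiveDimensionLE_of_finite_projectiveDimension {d : ℕ}
    (hd : ∀ P : C, Projective P → HasInjectiveDimensionLE P d) {X : C}
    (hX : ∃ n, HasProjectiveDimensionLE X n) : HasProjectiveDimensionLE X d :=
  have hP : IsClosedUnderSyzygies fun Y : C ↦ ∃ n, HasProjectiveDimensionLE Y n :=
    isClosedUnderSyzygies_finite_projectiveDimension
  hP.hasProjectiveDimensionLE_of_hasInjectiveDimensionLE
    (fun _ ⟨_, hY⟩ ↦ hasInjectiveDimensionLE_of_hasProjectiveDimensionLE hd hY) hX

end Syzygies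

section FlatTensor

open LinearMap TensorProduct

variable {R : Type*} [CommRing R] {M N P : Type*} [AddCommGroup M] [Module R M]
  [AddCommGroup N] [Module R N] [AddCommGroup P] [Module R P]

lemma flat_of_exact_of_flat [Module.Flat R N] [Module.Flat R P] {f : M →ₗ[R] N} {g : N →ₗ[R] P}
    (hf : Function.Injective f) (hfg : Function.Exact f g) (hg : Function.Surjective g) :
    Module.Flat R M := by
  refine Module.Flat.iff_rTensor_preserves_injective_linearMap.2 fun A B _ _ _ _ j hj ↦ ?_
  have hfA : Function.Injective (f.lTensor A) :=
    lTensor_injective_of_exact_of_flat g hg f hf hfg A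
  have hjN : Function.Injective (j.rTensor N) :=
    Module.Flat.rTensor_preserves_injective_linearMap j hj
  have hcomm : f.lTensor B ∘ₗ j.rTensor M = j.rTensor N ∘ₗ f.lTensor A := by
    rw [lTensor_comp_rTensor, rTensor_comp_lTensor]
  refine Function.Injective.of_comp (f := f.lTensor B) ?_
  rw [← coe_comp, hcomm]
  exact hjN.comp hfA

variable (F : Type*) [AddCommGroup F] [Module R F] (Q : Type*) [AddCommGroup Q] [Module R Q]

lemma lcomp_comp_lTensorHomToHomLTensor (f : M →ₗ[R] N) :
    lcomp R (F ⊗[R] Q) f ∘ₗ lTensorHomToHomLTensor (.id R) N F Q =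
      lTensorHomToHomLTensor (.id R) M F Q ∘ₗ (lcomp R Q f).lTensor F := by
  ext; simp

lemma bijective_lTensorHomToHomLTensor_of_projective [Module.Finite R M] [Module.Projective R M] :
    Function.Bijective (lTensorHomToHomLTensor (.id R) M F Q) := by
  convert (lTensorHomEquivHomLTensor R M F Q).bijective using 1
  ext; simp

theorem bijective_lTensorHomToHomLTensor_of_flat [Module.Flat R F] [Module.FinitePresentation R M] :
    Function.Bijective (lTensorHomToHomLTensor (.id R) M F Q) := by
  obtain ⟨n, m, f, g, hf, hgf⟩ := Module.FinitePresentation.exists_fin' R M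
  exact bijective_of_bijective_of_injective_of_left_exact
    ((lcomp R Q f).lTensor F) ((lcomp R Q g).lTensor F)
    (lcomp R (F ⊗[R] Q) f) (lcomp R (F ⊗[R] Q) g) _ _ _
    (lcomp_comp_lTensorHomToHomLTensor F Q f) (lcomp_comp_lTensorHomToHomLTensor F Q g)
    (Module.Flat.lTensor_exact F (exact_lcomp_of_exact_of_surjective Q hgf hf))
    (exact_lcomp_of_exact_of_surjective _ hgf hf)
    (bijective_lTensorHomToHomLTensor_of_projective F Q)
    (bijective_lTensorHomToHomLTensor_of_projective F Q).injective
    (Module.Flat.lTensor_preserves_injective_linearMap _ (lcomp_injective_of_surjective f hf))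
    (lcomp_injective_of_surjective f hf)

variable {Q}

theorem baer_tensorProduct_of_flat [IsNoetherianRing R] [Module.Flat R F] (hQ : Module.Baer R Q) :
    Module.Baer R (F ⊗[R] Q) := by
  rw [Module.Baer.iff_surjective] at hQ ⊢
  intro I
  have := Module.finitePresentation_of_finite R I
  have hsurj : Function.Surjective
      (lcomp R (F ⊗[R] Q) I.subtype ∘ₗ lTensorHomToHomLTensor (.id R) R F Q) := by
    rw [lcomp_comp_lTensorHomToHomLTensor]
    exact (bijective_lTensorHomToHomLTensor_of_flat F Q).surjective.comp
      (lTensor_surjective F (hQ I))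
  rw [coe_comp] at hsurj
  exact hsurj.of_comp

end FlatTensor

section Resolutions

variable {R : Type u} [CommRing R] {M : Type u} [AddCommGroup M] [Module R M] {n : ℕ}

lemma HasFlatDimLE.flat (h : HasFlatDimLE R M 0) : Module.Flat R M := by
  obtain ⟨F, d, ε, hF, hF0, hε, hd₀, -⟩ := h
  have := hF0 1 one_pos
  have hε' : Function.Injective ε := by
    rw [← LinearMap.ker_eq_bot, ← hd₀, LinearMap.range_eq_bot]
    exact Subsingleton.elim _ _
  have := hF 0
  exact Module.Flat.of_linearEquiv (LinearEquiv.ofBijective ε ⟨hε', hε⟩).symm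

lemma HasFlatDimLE.exists_surjective_flat (h : HasFlatDimLE R M (n + 1)) :
    ∃ (F : ModuleCat.{u} R) (ε : F →ₗ[R] M), Module.Flat R F ∧ Function.Surjective ε ∧
      HasFlatDimLE R (LinearMap.ker ε) n := by
  obtain ⟨F, d, ε, hF, hF0, hε, hd₀, hd⟩ := h
  refine ⟨F 0, ε, hF 0, hε, ?_⟩
  rw [← hd₀]
  exact ⟨fun i ↦ F (i + 1), fun i ↦ d (i + 1), (d 0).rangeRestrict, fun i ↦ hF (i + 1),
    fun i hi ↦ hF0 (i + 1) (by lia), (d 0).surjective_rangeRestrict,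
    (hd 0).trans (d 0).ker_rangeRestrict.symm, fun i ↦ hd (i + 1)⟩

lemma HasFlatDimLE.exists_hasProjectiveDimensionLE {d : ℕ}
    (hd : ∀ F : ModuleCat.{u} R, Module.Flat R F → HasProjectiveDimensionLE F d)
    (h : HasFlatDimLE R M n) : ∃ k, HasProjectiveDimensionLE (ModuleCat.of R M) k := by
  induction n generalizing M with
  | zero => exact ⟨d, hd _ h.flat⟩
  | succ n ih =>
    obtain ⟨F, ε, hF, hε, hker⟩ := h.exists_surjective_flat
    obtain ⟨k, hk⟩ := ih hker
    have hFd := hd F hF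
    exact ⟨k + 1 + d, (LinearMap.shortExact_shortComplexKer hε).hasProjectiveDimensionLT_X₃
      (k + 1 + d) (hasProjectiveDimensionLT_of_ge _ (k + 1) _ (by lia))
      (hasProjectiveDimensionLT_of_ge F (d + 1) _ (by lia))⟩

lemma HasProjDimLE.of_projective [Module.Projective R M] : HasProjDimLE R M 0 := by
  refine ⟨fun | 0 => .of R M | _ + 1 => .of R PUnit, fun _ ↦ 0, LinearMap.id, ?_, ?_,
    Function.surjective_id, ?_, ?_⟩
  · rintro (_ | i)
    · assumption
    · exact inferInstanceAs (Module.Projective R PUnit.{u + 1})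
  · rintro (_ | i) hi
    · contradiction
    · exact inferInstanceAs (Subsingleton PUnit.{u + 1})
  · rw [LinearMap.range_zero, LinearMap.ker_id]
  · have : Subsingleton (ModuleCat.of R PUnit.{u + 1}) :=
      inferInstanceAs (Subsingleton PUnit.{u + 1})
    exact fun i ↦ Subsingleton.elim (α := Submodule R (ModuleCat.of R PUnit.{u + 1})) _ _

lemma HasProjDimLE.of_surjective_projective {P : Type u} [AddCommGroup P] [Module R P]
    [Module.Projective R P] {π : P →ₗ[R] M} (hπ : Function.Surjective π)
    (h : HasProjDimLE R (LinearMap.ker π) n) : HasProjDimLE R M (n + 1) := by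
  obtain ⟨Q, d, ε, hQ, hQ0, hε, hd₀, hd⟩ := h
  refine ⟨fun | 0 => .of R P | i + 1 => Q i,
    fun | 0 => (LinearMap.ker π).subtype ∘ₗ ε | i + 1 => d i, π, ?_, ?_, hπ, ?_, ?_⟩
  · rintro (_ | i)
    · assumption
    · exact hQ i
  · rintro (_ | i) hi
    · contradiction
    · exact hQ0 i (by lia)
  · exact (LinearMap.range_comp_of_range_eq_top _ (LinearMap.range_eq_top.2 hε)).trans
      (Submodule.range_subtype _)
  · rintro (_ | i)
    · exact hd₀.trans (LinearMap.ker_comp_of_ker_eq_bot _ (Submodule.ker_subtype _)).symm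
    · exact hd i

lemma HasProjDimLE.of_hasProjectiveDimensionLE
    (h : HasProjectiveDimensionLE (ModuleCat.of R M) n) : HasProjDimLE R M n := by
  induction n generalizing M with
  | zero =>
    have : Projective (ModuleCat.of R M) := (projective_iff_hasProjectiveDimensionLE_zero _).2 h
    have := (IsProjective.iff_projective M).2 this
    exact .of_projective
  | succ n ih =>
    have hπ := Finsupp.linearCombination_id_surjective R M
    have hker := ((LinearMap.shortExact_shortComplexKer hπ).hasProjectiveDimensionLT_X₃_iff n
      (ModuleCat.projective_of_free (Finsupp.basisSingleOne (R := R) (ι := M)))).1 h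
    exact .of_surjective_projective hπ (ih hker)

lemma HasInjDimLE.injective (h : HasInjDimLE R M 0) : Module.Injective R M := by
  obtain ⟨I, d, ι, hI, hI0, hι, hd₀, -⟩ := h
  have := hI0 1 one_pos
  have hι' : Function.Surjective ι := by
    rw [← LinearMap.range_eq_top, hd₀, LinearMap.ker_eq_top]
    exact Subsingleton.elim _ _
  have := hI 0
  exact Module.Injective.of_ringEquiv (.refl R) (LinearEquiv.ofBijective ι ⟨hι, hι'⟩).symm

lemma HasInjDimLE.exists_exact_injective (h : HasInjDimLE R M (n + 1)) :
    ∃ (I N : ModuleCat.{u} R) (ι : M →ₗ[R] I) (π : I →ₗ[R] N), Module.Injective R I ∧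
      Function.Injective ι ∧ Function.Exact ι π ∧ Function.Surjective π ∧ HasInjDimLE R N n := by
  obtain ⟨I, d, ι, hI, hI0, hι, hd₀, hd⟩ := h
  refine ⟨I 0, .of R (LinearMap.range (d 0)), ι, (d 0).rangeRestrict, hI 0, hι,
    LinearMap.exact_iff.2 ((d 0).ker_rangeRestrict.trans hd₀.symm),
    (d 0).surjective_rangeRestrict, ?_⟩
  exact ⟨fun i ↦ I (i + 1), fun i ↦ d (i + 1), (LinearMap.range (d 0)).subtype,
    fun i ↦ hI (i + 1), fun i hi ↦ hI0 (i + 1) (by lia), Subtype.val_injective,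
    (Submodule.range_subtype _).trans (hd 0), fun i ↦ hd (i + 1)⟩

lemma HasInjDimLE.hasInjectiveDimensionLE (h : HasInjDimLE R M n) :
    HasInjectiveDimensionLE (ModuleCat.of R M) n := by
  induction n generalizing M with
  | zero =>
    have : Injective (ModuleCat.of R M) := (Module.injective_iff_injective_object R M).1 h.injective
    infer_instance
  | succ n ih =>
    obtain ⟨I, N, ι, π, hI, hι, hιπ, hπ, hN⟩ := h.exists_exact_injective
    have hS := ModuleCat.shortComplex_shortExact
      (ModuleCat.shortComplexOfCompEqZero ι π hιπ.linearMap_comp_eq_zero) hιπ hι hπ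
    have hI' : Injective I := (Module.injective_iff_injective_object R I).1 hI
    exact (hS.hasInjectiveDimensionLT_X₃_iff n hI').1 (ih hN)

lemma HasInjDimLE.tensorProduct_of_flat [IsNoetherianRing R] (h : HasInjDimLE R M n)
    (F : Type u) [AddCommGroup F] [Module R F] [Module.Flat R F] :
    HasInjDimLE R (F ⊗[R] M) n := by
  obtain ⟨I, d, ι, hI, hI0, hι, hd₀, hd⟩ := h
  have range_eq_ker {A B C : Type u} [AddCommGroup A] [AddCommGroup B] [AddCommGroup C]
      [Module R A] [Module R B] [Module R C] {f : A →ₗ[R] B} {g : B →ₗ[R] C}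
      (hfg : LinearMap.range f = LinearMap.ker g) :
      LinearMap.range (f.lTensor F) = LinearMap.ker (g.lTensor F) :=
    (LinearMap.exact_iff.1 (Module.Flat.lTensor_exact F (LinearMap.exact_iff.2 hfg.symm))).symm
  refine ⟨fun i ↦ .of R (F ⊗[R] I i), fun i ↦ (d i).lTensor F, ι.lTensor F, fun i ↦ ?_,
    fun i hi ↦ ?_, Module.Flat.lTensor_preserves_injective_linearMap ι hι, range_eq_ker hd₀,
    fun i ↦ range_eq_ker (hd i)⟩
  · exact (baer_tensorProduct_of_flat F (.of_injective (hI i))).injective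
  · have := hI0 i hi
    exact inferInstanceAs (Subsingleton (F ⊗[R] I i))

end Resolutions

section FlatModules

lemma isClosedUnderSyzygies_flat {R : Type u} [CommRing R] [Small.{v} R] :
    IsClosedUnderSyzygies fun F : ModuleCat.{v} R ↦ Module.Flat R F := by
  intro S hS h₂ h₃
  have := (IsProjective.iff_projective S.X₂).2 h₂
  exact flat_of_exact_of_flat hS.moduleCat_injective_f
    ((ShortComplex.ShortExact.moduleCat_exact_iff_function_exact S).1 hS.exact)
    hS.moduleCat_surjective_g

variable {R : Type u} [CommRing R] [IsNoetherianRing R] {d : ℕ}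

lemma HasInjDimLE.hasInjectiveDimensionLE_of_flat (hR : HasInjDimLE R R d) (F : ModuleCat.{u} R)
    (hF : Module.Flat R F) : HasInjectiveDimensionLE F d := by
  have := (hR.tensorProduct_of_flat F).hasInjectiveDimensionLE
  exact hasInjectiveDimensionLT_of_iso (TensorProduct.rid R F).toModuleIso (d + 1)

theorem HasInjDimLE.hasProjectiveDimensionLE_of_flat (hR : HasInjDimLE R R d)
    (F : ModuleCat.{u} R) (hF : Module.Flat R F) : HasProjectiveDimensionLE F d :=
  isClosedUnderSyzygies_flat.hasProjectiveDimensionLE_of_hasInjectiveDimensionLE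
    hR.hasInjectiveDimensionLE_of_flat hF

lemma HasInjDimLE.hasInjectiveDimensionLE_of_projective (hR : HasInjDimLE R R d)
    (P : ModuleCat.{u} R) (hP : Projective P) : HasInjectiveDimensionLE P d := by
  have := (IsProjective.iff_projective P).2 hP
  exact hR.hasInjectiveDimensionLE_of_flat P inferInstance

end FlatModules

/-- Over a commutative Noetherian ring of self-injective dimension at most `d`, every
module of finite flat dimension has projective dimension at most `d`. -/
theorem projDimLE_of_finite_flatDim_of_gorenstein
    (R : Type u) [CommRing R] [IsNoetherianRing R] (d : ℕ)
    (hR : HasInjDimLE R R d)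
    (M : Type u) [AddCommGroup M] [Module R M]
    (hM : ∃ n : ℕ, HasFlatDimLE R M n) :
    HasProjDimLE R M d := by
  obtain ⟨n, hn⟩ := hM
  have finite_pd := hn.exists_hasProjectiveDimensionLE hR.hasProjectiveDimensionLE_of_flat
  exact .of_hasProjectiveDimensionLE
    (hasProjectiveDimensionLE_of_finite_projectiveDimension
      hR.hasInjectiveDimensionLE_of_projective finite_pd)
end

section
/- Let S be a commutative Noetherian ring of finite injective dimension as a module over itself, let I be an ideal of S, and let R = S/I. Then every R-module M of finite flat dimension over R has finite projective dimension over R. -/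
/-!
If `S` is a commutative Noetherian ring of finite injective dimension as a module over
itself (a Gorenstein ring of finite Krull dimension) and `R = S/I` is a quotient of `S`,
then every `R`-module of finite flat dimension has finite projective dimension.
-/

universe u

open CategoryTheory

/-!
The heart of the matter is a bound, uniform in the flat `S ⧸ I`-modules `F` and `G`, on the degrees
`k` with `Ext^k(F, G) ≠ 0`. Syzygies of flat modules are flat, so the syzygy sequence of `F` splits
once its degree exceeds the bound, and flat modules have bounded projective dimension.

For the bound, consider the class of `S ⧸ I`-modules `N` such that `Ext^k(F, G ⊗ N)` vanishes for
large `k`, uniformly in `F` and `G`. It is closed under retracts, extensions and kernels of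
epimorphisms. It contains `Hom(S ⧸ P, J)` for `J` injective over `S` and `P ⊇ I`: this module is
injective over `S ⧸ P`, and stays so after tensoring with a flat module. We want it to contain
`S ⧸ I`, hence want `S ⧸ P` for all primes `P ⊇ I`, and by Noetherian induction may assume it
contains `S ⧸ Q` for all primes `Q > P`. Apply `Hom(S ⧸ P, -)` to a finite injective resolution of
`S`. The terms of this complex lie in the class, its cohomology `Ext^i(S ⧸ P, S)` is finitely
generated, and some cohomology module has `P` in its support. Descend from the top degree: cocycles
and coboundaries lie in the class as long as the cohomology is built from the `S ⧸ Q` with `Q > P`,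
and at the first failure a member of the class killed by `P` maps onto `S ⧸ P`. That map splits, so
`S ⧸ P` is a retract of a member of the class.
-/

open Abelian TensorProduct

section Devissage

variable {S : Type u} [CommRing S]

theorem isClosedUnderIsomorphisms_of_isClosedUnderExtensions
    (C : ObjectProperty (ModuleCat.{u} S)) [C.ContainsZero] [C.IsClosedUnderExtensions] :
    C.IsClosedUnderIsomorphisms where
  of_iso {X Y} e hX := by
    obtain ⟨Z, hZ, hCZ⟩ := C.exists_prop_of_containsZero
    have hT : (ShortComplex.mk e.hom (0 : Y ⟶ Z) Limits.comp_zero).ShortExact :=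
      { exact := (ShortComplex.exact_iff_epi _ rfl).mpr inferInstance
        mono_f := inferInstance
        epi_g := hZ.epi _ }
    exact C.prop_X₂_of_shortExact hT hX hCZ

theorem prop_of_forall_mem_support [IsNoetherianRing S]
    (C : ObjectProperty (ModuleCat.{u} S)) [C.ContainsZero] [C.IsClosedUnderExtensions]
    (N : Type u) [AddCommGroup N] [Module S N] (hfin : Module.Finite S N)
    (hN : ∀ Q ∈ Module.support S N, C (.of S (S ⧸ Q.asIdeal))) : C (.of S N) := by
  have := isClosedUnderIsomorphisms_of_isClosedUnderExtensions C
  revert hN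
  induction hfin using IsNoetherianRing.induction_on_isQuotientEquivQuotientPrime S with
  | subsingleton N =>
    intro _
    exact C.prop_of_isZero (ModuleCat.isZero_of_subsingleton _)
  | quotient N Q e =>
    intro hN
    refine C.prop_of_iso e.symm.toModuleIso (hN Q ?_)
    rw [e.support_eq, Module.mem_support_iff_of_finite, Ideal.annihilator_quotient]
  | exact N₁ N₂ N₃ f g hf hg hfg h₁ h₃ =>
    intro hN
    let T := ModuleCat.shortComplexOfCompEqZero f g hfg.linearMap_comp_eq_zero
    exact C.prop_X₂_of_shortExact (ModuleCat.shortComplex_shortExact T hfg hf hg)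
      (h₁ fun Q hQ => hN Q (Module.support_subset_of_injective f hf hQ))
      (h₃ fun Q hQ => hN Q (Module.support_subset_of_surjective g hg hQ))

theorem exists_surjective_ker_comp_of_exact {X Y₁ Y₂ Y₃ : Type*} [AddCommGroup X] [Module S X]
    [AddCommGroup Y₁] [Module S Y₁] [AddCommGroup Y₂] [Module S Y₂] [AddCommGroup Y₃] [Module S Y₃]
    {f : Y₁ →ₗ[S] Y₂} {h : Y₂ →ₗ[S] Y₃} {g : X →ₗ[S] Y₂} (hf : Function.Injective f)
    (hfh : Function.Exact f h) (hg : Function.Surjective g) :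
    ∃ g' : LinearMap.ker (h ∘ₗ g) →ₗ[S] Y₁, Function.Surjective g' ∧
      LinearMap.ker g' = (LinearMap.ker g).comap (LinearMap.ker (h ∘ₗ g)).subtype := by
  let K := LinearMap.ker (h ∘ₗ g)
  have hgK (x : K) : g x ∈ LinearMap.range f := (hfh _).mp x.2
  let g' : K →ₗ[S] Y₁ :=
    (LinearEquiv.ofInjective f hf).symm.toLinearMap ∘ₗ (g ∘ₗ K.subtype).codRestrict _ hgK
  have hfg' : f ∘ₗ g' = g ∘ₗ K.subtype := by
    ext x
    exact congrArg Subtype.val ((LinearEquiv.ofInjective f hf).apply_symm_apply ⟨g x, hgK x⟩)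
  refine ⟨g', fun y => ?_, ?_⟩
  · obtain ⟨x, hx⟩ := hg (f y)
    refine ⟨⟨x, (congrArg h hx).trans (hfh.apply_apply_eq_zero y)⟩, hf ?_⟩
    exact (LinearMap.congr_fun hfg' _).trans hx
  · rw [← LinearMap.ker_comp, ← hfg',
      LinearMap.ker_comp_of_ker_eq_bot _ (LinearMap.ker_eq_bot.mpr hf)]

/-- A class of `S`-modules containing zero and closed under retracts, extensions and kernels of
epimorphisms. The last two are only required of short exact sequences whose middle term is killed
by `I`: the class is meant for `S ⧸ I`-modules, viewed over `S` so that `Ext` over `S` applies. -/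
structure IsDevissageClass (I : Ideal S) (C : ObjectProperty (ModuleCat.{u} S)) : Prop where
  containsZero : C.ContainsZero
  isStableUnderRetracts : C.IsStableUnderRetracts
  extension {T : ShortComplex (ModuleCat.{u} S)} (hT : T.ShortExact)
    (hI : I ≤ Module.annihilator S T.X₂) (h₁ : C T.X₁) (h₃ : C T.X₃) : C T.X₂
  kernel {T : ShortComplex (ModuleCat.{u} S)} (hT : T.ShortExact)
    (hI : I ≤ Module.annihilator S T.X₂) (h₂ : C T.X₂) (h₃ : C T.X₃) : C T.X₁

namespace IsDevissageClass

variable {I : Ideal S} {C : ObjectProperty (ModuleCat.{u} S)}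

theorem of_linearEquiv (hC : IsDevissageClass I C) {X Y : Type u} [AddCommGroup X] [Module S X]
    [AddCommGroup Y] [Module S Y] (e : X ≃ₗ[S] Y) (hX : C (.of S X)) : C (.of S Y) :=
  have := hC.isStableUnderRetracts
  C.prop_of_retract (.ofIso e.symm.toModuleIso) hX

theorem of_finite [IsNoetherianRing S] (hC : IsDevissageClass I C) {N : Type u} [AddCommGroup N]
    [Module S N] [Module.Finite S N] (hI : I ≤ Module.annihilator S N)
    (hN : ∀ Q ∈ Module.support S N, C (.of S (S ⧸ Q.asIdeal))) : C (.of S N) := by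
  let C' : ObjectProperty (ModuleCat.{u} S) := fun X => I ≤ Module.annihilator S X → C X
  have : C'.ContainsZero :=
    have := hC.containsZero
    let ⟨Z, hZ, hCZ⟩ := C.exists_prop_of_containsZero
    ⟨Z, hZ, fun _ => hCZ⟩
  have : C'.IsClosedUnderExtensions := ⟨fun hT h₁ h₃ hI₂ => hC.extension hT hI₂
    (h₁ (hI₂.trans (LinearMap.annihilator_le_of_injective _ hT.moduleCat_injective_f)))
    (h₃ (hI₂.trans (LinearMap.annihilator_le_of_surjective _ hT.moduleCat_surjective_g)))⟩
  exact prop_of_forall_mem_support C' N inferInstance (fun Q hQ _ => hN Q hQ) hI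

theorem ker (hC : IsDevissageClass I C) {X Y : Type u} [AddCommGroup X] [Module S X]
    [AddCommGroup Y] [Module S Y] {g : X →ₗ[S] Y} (hg : Function.Surjective g)
    (hI : I ≤ Module.annihilator S X) (hX : C (.of S X)) (hY : C (.of S Y)) :
    C (.of S (LinearMap.ker g)) :=
  hC.kernel (LinearMap.shortExact_shortComplexKer hg) hI hX hY

theorem quotient_of_surjective (hC : IsDevissageClass I C) {J : Ideal S} {X : Type u}
    [AddCommGroup X] [Module S X] {g : X →ₗ[S] S ⧸ J} (hg : Function.Surjective g)
    (hJ : J ≤ Module.annihilator S X) (hX : C (.of S X)) : C (.of S (S ⧸ J)) := by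
  have := hC.isStableUnderRetracts
  obtain ⟨x, hx⟩ := hg 1
  let s : S ⧸ J →ₗ[S] X := J.liftQ (.toSpanSingleton S X x)
    fun a ha => Module.mem_annihilator.mp (hJ ha) x
  have hs : g ∘ₗ s = .id := by
    ext
    exact (congrArg g (one_smul S x)).trans hx
  exact C.prop_of_retract ⟨ModuleCat.ofHom s, ModuleCat.ofHom g, ModuleCat.hom_ext hs⟩ hX

theorem quotient_or_ker [IsNoetherianRing S] (hC : IsDevissageClass I C) {P : PrimeSpectrum S}
    (hIP : I ≤ P.asIdeal) (hP : ∀ Q > P, C (.of S (S ⧸ Q.asIdeal)))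
    {X Y : Type u} [AddCommGroup X] [Module S X] [AddCommGroup Y] [Module S Y]
    (hfin : Module.Finite S Y) {g : X →ₗ[S] Y} (hg : Function.Surjective g)
    (hPX : P.asIdeal ≤ Module.annihilator S X) (hX : C (.of S X)) :
    C (.of S (S ⧸ P.asIdeal)) ∨ (C (.of S (LinearMap.ker g)) ∧ P ∉ Module.support S Y) := by
  induction hfin using IsNoetherianRing.induction_on_isQuotientEquivQuotientPrime S
    generalizing X with
  | subsingleton Y =>
    have hker : LinearMap.ker g = ⊤ := LinearMap.ker_eq_top.mpr (Subsingleton.elim _ _)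
    refine .inr ⟨hC.of_linearEquiv ((LinearEquiv.ofTop _ hker).symm) hX, ?_⟩
    rw [Module.support_eq_empty]
    exact Set.notMem_empty P
  | quotient Y Q e =>
    have heg : Function.Surjective (e.toLinearMap ∘ₗ g) := e.surjective.comp hg
    have hPQ : P ≤ Q := by
      have := hPX.trans (LinearMap.annihilator_le_of_surjective _ heg)
      rwa [Ideal.annihilator_quotient] at this
    obtain rfl | hlt := hPQ.eq_or_lt
    · exact .inl (hC.quotient_of_surjective heg hPX hX)
    refine .inr ⟨hC.ker hg (hIP.trans hPX) hX (hC.of_linearEquiv e.symm (hP Q hlt)), fun h => ?_⟩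
    rw [e.support_eq, Module.mem_support_iff_of_finite, Ideal.annihilator_quotient] at h
    exact hlt.not_ge h
  | exact Y₁ Y₂ Y₃ f h hf hh hfh ih₁ ih₃ =>
    obtain hCP | ⟨hCK, hP₃⟩ := ih₃ (g := h ∘ₗ g) (hh.comp hg) hPX hX
    · exact .inl hCP
    let K := LinearMap.ker (h ∘ₗ g)
    obtain ⟨g', hg', hker⟩ := exists_surjective_ker_comp_of_exact hf hfh hg
    have hPK : P.asIdeal ≤ Module.annihilator S K :=
      hPX.trans (K.subtype.annihilator_le_of_injective K.subtype_injective)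
    refine (ih₁ hg' hPK hCK).imp_right fun ⟨hCker, hP₁⟩ => ⟨?_, ?_⟩
    · exact hC.of_linearEquiv (.trans (.ofEq _ _ hker)
        (Submodule.comapSubtypeEquivOfLe (LinearMap.ker_le_ker_comp g h))) hCker
    · rw [Module.support_of_exact hfh hf hh]
      exact fun hmem => hmem.elim hP₁ hP₃

end IsDevissageClass

end Devissage

section ExtSupport

open scoped Pointwise

variable {S : Type u} [CommRing S]

theorem wellFoundedGT_primeSpectrum (S : Type*) [CommRing S] [IsNoetherianRing S] :
    WellFoundedGT (PrimeSpectrum S) :=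
  StrictMono.wellFoundedGT (f := PrimeSpectrum.asIdeal) fun _ _ h => h

theorem annihilator_le_annihilator_ext (A N : ModuleCat.{u} S) (i : ℕ) :
    Module.annihilator S A ≤ Module.annihilator S (Ext A N i) := by
  refine fun s hs => Module.mem_annihilator.mpr fun x => ?_
  have hid : s • 𝟙 A = 0 := by
    ext a
    exact Module.mem_annihilator.mp hs a
  calc s • x = (Ext.mk₀ (s • 𝟙 A)).comp x (zero_add i) := by
        rw [Ext.mk₀_smul, Ext.smul_comp, Ext.mk₀_id_comp]
    _ = 0 := by rw [hid, Ext.mk₀_zero, Ext.zero_comp]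

theorem notMem_support_of_exact {X Y Z : Type*} [AddCommGroup X] [Module S X] [AddCommGroup Y]
    [Module S Y] [AddCommGroup Z] [Module S Z] {f : X →ₗ[S] Y} {g : Y →ₗ[S] Z}
    (hfg : Function.Exact f g) {P : PrimeSpectrum S} (hX : P ∉ Module.support S X)
    (hZ : P ∉ Module.support S Z) : P ∉ Module.support S Y := by
  rw [Module.support_of_exact (f := (LinearMap.range f).subtype) (g := g.rangeRestrict)
    (fun y => by
      rw [← Subtype.val_inj]
      simpa using hfg y) (Submodule.subtype_injective _) g.surjective_rangeRestrict]
  rintro (hmem | hmem)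
  · exact hX (Module.support_subset_of_surjective _ f.surjective_rangeRestrict hmem)
  · exact hZ (Module.support_subset_of_injective _ (Submodule.subtype_injective _) hmem)

/-- The class of modules `A` such that every `Ext^i(A, N)` vanishes after localizing at `P`. -/
def ExtVanishesAt (P : PrimeSpectrum S) (N : ModuleCat.{u} S) : ObjectProperty (ModuleCat.{u} S) :=
  fun A => ∀ i, P ∉ Module.support S (Ext A N i)

namespace ExtVanishesAt

variable {P : PrimeSpectrum S} {N : ModuleCat.{u} S}

theorem of_not_annihilator_le {A : ModuleCat.{u} S}
    (hA : ¬ Module.annihilator S A ≤ P.asIdeal) : ExtVanishesAt P N A :=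
  fun i hmem => hA ((annihilator_le_annihilator_ext A N i).trans
    (Module.annihilator_le_of_mem_support hmem))

instance : (ExtVanishesAt P N).ContainsZero where
  exists_zero := ⟨.of S PUnit, ModuleCat.isZero_of_subsingleton _,
    of_not_annihilator_le <| by
      rw [Module.annihilator_eq_top_iff.mpr inferInstance, top_le_iff]
      exact P.isPrime.ne_top⟩

instance : (ExtVanishesAt P N).IsClosedUnderExtensions where
  prop_X₂_of_shortExact {T} hT h₁ h₃ i := by
    refine notMem_support_of_exact (f := (Ext.mk₀ T.g).precompOfLinear S N (zero_add i))
      (g := (Ext.mk₀ T.f).precompOfLinear S N (zero_add i)) (fun x => ⟨?_, ?_⟩) (h₃ i) (h₁ i)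
    · exact Ext.contravariant_sequence_exact₂ hT N x
    · rintro ⟨y, rfl⟩
      simp

theorem of_quotSMulTop [IsNoetherianRing S] [Module.Finite S N] {A : ModuleCat.{u} S}
    [Module.Finite S A] {x : S} (hxA : IsSMulRegular A x) (hxP : x ∈ P.asIdeal)
    (hA : ExtVanishesAt P N (.of S (QuotSMulTop x A))) : ExtVanishesAt P N A := by
  intro i hmem
  have hT := hxA.smulShortComplex_shortExact
  let δ : Ext A N i →ₗ[S] Ext (.of S (QuotSMulTop x A)) N (1 + i) :=
    hT.extClass.precompOfLinear S N rfl
  have hker : LinearMap.ker δ ≤ x • ⊤ := fun y hy => by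
    obtain ⟨(z : Ext A N i), rfl⟩ := Ext.contravariant_sequence_exact₁ hT N y rfl hy
    have hxz : (Ext.mk₀ (x • 𝟙 A)).comp z (zero_add i) = x • z := by
      rw [Ext.mk₀_smul, Ext.smul_comp, Ext.mk₀_id_comp]
    exact hxz ▸ Submodule.smul_mem_pointwise_smul z x ⊤ trivial
  -- By Nakayama's lemma `P` stays in the support of `Ext A N i` modulo `x`, and this quotient is
  -- also a quotient of `range δ`.
  have hquot : P ∈ Module.support S (QuotSMulTop x (Ext A N i)) := by
    rw [Module.support_quotSMulTop]
    exact ⟨hmem, by simpa using hxP⟩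
  have hrange : P ∈ Module.support S (LinearMap.range δ) :=
    Module.support_subset_of_surjective
      ((Submodule.factor hker) ∘ₗ δ.quotKerEquivRange.symm.toLinearMap)
      ((Submodule.factor_surjective hker).comp δ.quotKerEquivRange.symm.surjective) hquot
  exact hA (1 + i) (Module.support_subset_of_injective _ (Submodule.subtype_injective _) hrange)

theorem quotient_prime [IsNoetherianRing S] [Module.Finite S N]
    (hP : ExtVanishesAt P N (.of S (S ⧸ P.asIdeal))) (Q : PrimeSpectrum S) :
    ExtVanishesAt P N (.of S (S ⧸ Q.asIdeal)) := by
  have := wellFoundedGT_primeSpectrum S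
  induction Q using WellFoundedGT.induction with
  | ind Q ih =>
    by_cases hQP : Q ≤ P
    · obtain rfl | hlt := hQP.eq_or_lt
      · exact hP
      obtain ⟨x, hxP, hxQ⟩ := SetLike.exists_of_lt (show Q.asIdeal < P.asIdeal from hlt)
      have hreg : IsSMulRegular (S ⧸ Q.asIdeal) x :=
        (isSMulRegular_quotient_iff_mem_of_smul_mem _ _).mpr fun _ hy =>
          (Q.isPrime.mem_or_mem hy).resolve_left hxQ
      refine of_quotSMulTop hreg hxP (prop_of_forall_mem_support _ _ inferInstance
        fun Q' hQ' => ih Q' ?_)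
      have hann := Module.annihilator_le_of_mem_support hQ'
      have hQQ' : Q ≤ Q' :=
        ((Ideal.annihilator_quotient (I := Q.asIdeal)).ge.trans
          (LinearMap.annihilator_le_of_surjective _ (Submodule.mkQ_surjective _))).trans hann
      refine hQQ'.lt_of_ne ?_
      rintro rfl
      refine hxQ (hann (Module.mem_annihilator.mpr fun y => ?_))
      obtain ⟨y, rfl⟩ := Submodule.mkQ_surjective _ y
      rw [← map_smul]
      exact (Submodule.Quotient.mk_eq_zero _).mpr (Submodule.smul_mem_pointwise_smul y x ⊤ trivial)
    · refine of_not_annihilator_le ?_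
      rwa [Ideal.annihilator_quotient]

end ExtVanishesAt

theorem exists_mem_support_ext_quotient [IsNoetherianRing S] (N : ModuleCat.{u} S)
    [Module.Finite S N] {P : PrimeSpectrum S} (hP : P ∈ Module.support S N) :
    ∃ i, P ∈ Module.support S (Ext (.of S (S ⧸ P.asIdeal)) N i) := by
  by_contra! hvan
  have hS : ExtVanishesAt P N (.of S S) :=
    prop_of_forall_mem_support _ S inferInstance fun Q _ => .quotient_prime hvan Q
  let e : Ext (.of S S) N 0 ≃ₗ[S] N :=
    Ext.linearEquiv₀ ≪≫ₗ ModuleCat.homLinearEquiv ≪≫ₗ LinearMap.ringLmapEquivSelf S S N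
  exact hS 0 (e.support_eq ▸ hP)

end ExtSupport

section Connecting

variable {S : Type u} [CommRing S] {T : ShortComplex (ModuleCat.{u} S)} (hT : T.ShortExact)
  (A : ModuleCat.{u} S)

/-- The connecting map of the covariant long exact `Ext` sequence of a short exact sequence `T`. -/
noncomputable def extConnecting (i : ℕ) : Ext A T.X₃ i →ₗ[S] Ext A T.X₁ (i + 1) :=
  hT.extClass.postcompOfLinear S A rfl

theorem extConnecting_surjective [Injective T.X₂] (i : ℕ) :
    Function.Surjective (extConnecting hT A i) :=
  postcomp_extClass_surjective_of_projective_X₂ hT A i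

theorem extConnecting_succ_injective [Injective T.X₂] (i : ℕ) :
    Function.Injective (extConnecting hT A (i + 1)) := by
  rw [injective_iff_map_eq_zero]
  intro x hx
  obtain ⟨y, rfl⟩ := Ext.covariant_sequence_exact₃ A hT x rfl hx
  rw [Ext.eq_zero_of_injective y, Ext.zero_comp]

theorem exists_shortExact_ker_extConnecting_zero :
    ∃ (f : Ext A T.X₁ 0 →ₗ[S] Ext A T.X₂ 0)
      (g : Ext A T.X₂ 0 →ₗ[S] LinearMap.ker (extConnecting hT A 0)),
      Function.Injective f ∧ Function.Exact f g ∧ Function.Surjective g := by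
  have := hT.mono_f
  let f : Ext A T.X₁ 0 →ₗ[S] Ext A T.X₂ 0 := (Ext.mk₀ T.f).postcompOfLinear S A (add_zero 0)
  let g : Ext A T.X₂ 0 →ₗ[S] Ext A T.X₃ 0 := (Ext.mk₀ T.g).postcompOfLinear S A (add_zero 0)
  have hg (x : Ext A T.X₂ 0) : g x ∈ LinearMap.ker (extConnecting hT A 0) := by
    simp [g, extConnecting]
  refine ⟨f, g.codRestrict _ hg, Ext.postcomp_mk₀_injective_of_mono A T.f,
    fun x => ⟨fun hx => ?_, ?_⟩, ?_⟩
  · exact Ext.covariant_sequence_exact₂ A hT x (congrArg Subtype.val hx)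
  · rintro ⟨y, rfl⟩
    apply Subtype.ext
    simp [f, g]
  · rintro ⟨y, hy⟩
    obtain ⟨x, hx⟩ := Ext.covariant_sequence_exact₃ A hT y rfl hy
    exact ⟨x, Subtype.ext hx⟩

end Connecting

namespace IsDevissageClass

variable {S : Type u} [CommRing S] {I : Ideal S} {C : ObjectProperty (ModuleCat.{u} S)}
  {A N : ModuleCat.{u} S} {P : PrimeSpectrum S}

theorem ext_zero_of_ker (hC : IsDevissageClass I C) {T : ShortComplex (ModuleCat.{u} S)}
    (hT : T.ShortExact) (hIA : I ≤ Module.annihilator S A) (h₂ : C (.of S (Ext A T.X₂ 0)))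
    (hker : C (.of S (LinearMap.ker (extConnecting hT A 0)))) : C (.of S (Ext A T.X₁ 0)) := by
  obtain ⟨f, g, hf, hfg, hg⟩ := exists_shortExact_ker_extConnecting_zero hT A
  let T' := ModuleCat.shortComplexOfCompEqZero f g hfg.linearMap_comp_eq_zero
  exact hC.kernel (ModuleCat.shortComplex_shortExact T' hfg hf hg)
    (hIA.trans (annihilator_le_annihilator_ext A T.X₂ 0)) h₂ hker

theorem quotient_or_ext_zero [IsNoetherianRing S] (hC : IsDevissageClass I C)
    (hIP : I ≤ P.asIdeal) (hP : ∀ Q > P, C (.of S (S ⧸ Q.asIdeal)))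
    (hPA : P.asIdeal ≤ Module.annihilator S A)
    (hA : ∀ J : ModuleCat.{u} S, Injective J → C (.of S (Ext A J 0))) (n : ℕ)
    [hN : HasInjectiveDimensionLT N (n + 1)] (hfin : ∀ i, Module.Finite S (Ext A N (i + 1))) :
    C (.of S (S ⧸ P.asIdeal)) ∨
      (C (.of S (Ext A N 0)) ∧ ∀ i, P ∉ Module.support S (Ext A N (i + 1))) := by
  induction n generalizing N with
  | zero =>
    have := injective_iff_hasInjectiveDimensionLT_one.mpr hN
    refine .inr ⟨hA N this, fun i => ?_⟩
    have : Subsingleton (Ext A N (i + 1)) := Ext.subsingleton_of_injective A N i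
    rw [Module.support_eq_empty]
    exact Set.notMem_empty P
  | succ n ih =>
    let T := ShortComplex.mk _ _ (Limits.cokernel.condition (Injective.ι N))
    have hT : T.ShortExact := { exact := ShortComplex.exact_cokernel (Injective.ι N) }
    have : Injective T.X₂ := inferInstanceAs (Injective (Injective.under N))
    have hT₃ : HasInjectiveDimensionLT T.X₃ (n + 1) :=
      (hT.hasInjectiveDimensionLT_X₃_iff n this).mpr hN
    have hfin₃ (i : ℕ) : Module.Finite S (Ext A T.X₃ (i + 1)) :=
      have := hfin (i + 1)
      .of_injective _ (extConnecting_succ_injective hT A i)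
    obtain hCP | ⟨hC₃, hsupp⟩ := ih hfin₃
    · exact .inl hCP
    refine (hC.quotient_or_ker hIP hP (hfin 0) (extConnecting_surjective hT A 0)
      (hPA.trans (annihilator_le_annihilator_ext A T.X₃ 0)) hC₃).imp_right
      fun ⟨hker, hsupp₀⟩ => ⟨hC.ext_zero_of_ker hT (hIP.trans hPA) (hA _ this) hker, ?_⟩
    rintro (_ | i)
    · exact hsupp₀
    · exact fun hmem => hsupp i (Module.support_subset_of_injective _
        (LinearEquiv.ofBijective _ ⟨extConnecting_succ_injective hT A i,
          extConnecting_surjective hT A (i + 1)⟩).symm.injective hmem)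

theorem quotient_of_forall_gt [IsNoetherianRing S] (hC : IsDevissageClass I C)
    (hIP : I ≤ P.asIdeal) (hP : ∀ Q > P, C (.of S (S ⧸ Q.asIdeal)))
    (hA : ∀ J : ModuleCat.{u} S, Injective J → C (.of S (Ext (.of S (S ⧸ P.asIdeal)) J 0)))
    (n : ℕ) [HasInjectiveDimensionLT N (n + 1)] [Module.Finite S N]
    (hPN : P ∈ Module.support S N) : C (.of S (S ⧸ P.asIdeal)) := by
  have hPA : P.asIdeal ≤ Module.annihilator S (S ⧸ P.asIdeal) := Ideal.annihilator_quotient.ge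
  have hfin (i : ℕ) : Module.Finite S (Ext (.of S (S ⧸ P.asIdeal)) N i) :=
    ModuleCat.finite_ext _ _ _ _
  obtain hCP | ⟨hC₀, hsupp⟩ := hC.quotient_or_ext_zero hIP hP hPA hA n fun i => hfin (i + 1)
  · exact hCP
  have hPExt := hPA.trans (annihilator_le_annihilator_ext (.of S (S ⧸ P.asIdeal)) N 0)
  refine (hC.quotient_or_ker hIP hP (hfin 0) (g := .id) Function.surjective_id hPExt
    hC₀).resolve_right fun ⟨_, hsupp₀⟩ => ?_
  obtain ⟨_ | i, hi⟩ := exists_mem_support_ext_quotient N hPN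
  · exact hsupp₀ hi
  · exact hsupp i hi

theorem quotient [IsNoetherianRing S] (hC : IsDevissageClass I C) (n : ℕ)
    [HasInjectiveDimensionLT (ModuleCat.of S S) (n + 1)]
    (hI : ∀ P : PrimeSpectrum S, I ≤ P.asIdeal → ∀ J : ModuleCat.{u} S, Injective J →
      C (.of S (Ext (.of S (S ⧸ P.asIdeal)) J 0))) : C (.of S (S ⧸ I)) := by
  have := wellFoundedGT_primeSpectrum S
  have hprime (P : PrimeSpectrum S) (hIP : I ≤ P.asIdeal) : C (.of S (S ⧸ P.asIdeal)) := by
    induction P using WellFoundedGT.induction with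
    | ind P ih =>
      refine hC.quotient_of_forall_gt hIP (fun Q hQ => ih Q hQ (hIP.trans hQ.le)) (hI P hIP) n
        (N := .of S S) ?_
      rw [Module.mem_support_iff_of_finite, Module.annihilator_eq_bot.mpr inferInstance]
      exact bot_le
  refine hC.of_finite Ideal.annihilator_quotient.ge fun Q hQ => hprime Q ?_
  rwa [Module.mem_support_iff_of_finite, Ideal.annihilator_quotient] at hQ

end IsDevissageClass

section ExtSubsingleton

universe w

variable {D : Type*} [Category* D] [Abelian D] [HasExt.{w} D] {A : D}

theorem subsingleton_ext_of_retract {X Y : D} (r : Retract X Y) (k : ℕ)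
    [Subsingleton (Ext A Y k)] : Subsingleton (Ext A X k) := by
  refine subsingleton_of_forall_eq 0 fun x => ?_
  rw [← x.comp_mk₀_id, ← r.retract, ← Ext.mk₀_comp_mk₀, ← Ext.comp_assoc_of_third_deg_zero,
    Subsingleton.elim (x.comp (Ext.mk₀ r.i) (add_zero k)) 0, Ext.zero_comp]

theorem subsingleton_ext_X₂_of_shortExact {T : ShortComplex D} (hT : T.ShortExact) {k : ℕ}
    (h₁ : Subsingleton (Ext A T.X₁ k)) (h₃ : Subsingleton (Ext A T.X₃ k)) :
    Subsingleton (Ext A T.X₂ k) := by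
  refine subsingleton_of_forall_eq 0 fun x => ?_
  obtain ⟨y, rfl⟩ := Ext.covariant_sequence_exact₂ A hT x (Subsingleton.elim _ _)
  rw [Subsingleton.elim y 0, Ext.zero_comp]

theorem subsingleton_ext_X₁_succ_of_shortExact {T : ShortComplex D} (hT : T.ShortExact) {k : ℕ}
    (h₂ : Subsingleton (Ext A T.X₂ (k + 1))) (h₃ : Subsingleton (Ext A T.X₃ k)) :
    Subsingleton (Ext A T.X₁ (k + 1)) := by
  refine subsingleton_of_forall_eq 0 fun x => ?_
  obtain ⟨y, rfl⟩ := Ext.covariant_sequence_exact₁ A hT x (Subsingleton.elim _ _) rfl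
  rw [Subsingleton.elim y 0, Ext.zero_comp]

end ExtSubsingleton

section InjectiveTensorFlat

variable {A : Type u} [CommRing A] {E G : Type u} [AddCommGroup E] [Module A E] [AddCommGroup G]
  [Module A G]

theorem rTensorHomToHomRTensor_rTensor_lcomp {N N' : Type*} [AddCommGroup N] [Module A N]
    [AddCommGroup N'] [Module A N'] (f : N' →ₗ[A] N) (z : (N →ₗ[A] E) ⊗[A] G) :
    rTensorHomToHomRTensor (.id A) N' E G ((f.lcomp A E).rTensor G z) =
      rTensorHomToHomRTensor (.id A) N E G z ∘ₗ f := by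
  induction z with
  | zero => simp
  | add x y hx hy => rw [map_add, map_add, hx, hy, map_add, LinearMap.add_comp]
  | tmul φ y =>
    ext
    simp

theorem rTensorHomToHomRTensor_surjective {N : Type*} [AddCommGroup N] [Module A N]
    [Module.FinitePresentation A N] [Module.Flat A G] :
    Function.Surjective (rTensorHomToHomRTensor (.id A) N E G) := by
  intro φ
  obtain ⟨n, K, e, hK⟩ := Module.FinitePresentation.exists_fin A N
  obtain ⟨m, g, hg⟩ := K.fg_iff_exists_fin_linearMap.mp hK
  let a : (Fin n → A) →ₗ[A] N := e.symm.toLinearMap ∘ₗ K.mkQ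
  have ha : Function.Surjective a := e.symm.surjective.comp K.mkQ_surjective
  have hga : Function.Exact g a := by
    rw [LinearMap.exact_iff, hg, LinearEquiv.ker_comp, Submodule.ker_mkQ]
  have hexact := Module.Flat.rTensor_exact G (LinearMap.exact_lcomp_of_exact_of_surjective E hga ha)
  obtain ⟨z, hz⟩ := (rTensorHomEquivHomRTensor A (Fin n → A) E G).surjective (φ ∘ₗ a)
  rw [rTensorHomEquivHomRTensor_apply] at hz
  have hgz : (g.lcomp A E).rTensor G z = 0 := by
    apply (rTensorHomEquivHomRTensor A (Fin m → A) E G).injective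
    rw [rTensorHomEquivHomRTensor_apply, rTensorHomToHomRTensor_rTensor_lcomp, hz, map_zero,
      LinearMap.comp_assoc, hga.linearMap_comp_eq_zero, LinearMap.comp_zero]
  obtain ⟨w, rfl⟩ := (hexact z).mp hgz
  refine ⟨w, (LinearMap.cancel_right ha).mp ?_⟩
  rw [← rTensorHomToHomRTensor_rTensor_lcomp, hz]

theorem injective_tensorProduct_of_flat [IsNoetherianRing A] [Module.Injective A E]
    [Module.Flat A G] : Module.Injective A (E ⊗[A] G) := by
  refine Module.Baer.injective (Module.Baer.iff_surjective.mpr fun K φ => ?_)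
  have : Module.FinitePresentation A K := Module.finitePresentation_of_finite A K
  obtain ⟨w, rfl⟩ := rTensorHomToHomRTensor_surjective φ
  have hE : Function.Surjective (K.subtype.lcomp A E) :=
    Module.Baer.iff_surjective.mp (.of_injective inferInstance) K
  obtain ⟨v, rfl⟩ := LinearMap.rTensor_surjective G hE w
  exact ⟨rTensorHomToHomRTensor (.id A) A E G v, (rTensorHomToHomRTensor_rTensor_lcomp _ v).symm⟩

end InjectiveTensorFlat

section TorsionBySet

variable {S : Type u} [CommRing S] (P : Ideal S) (J : Type u) [AddCommGroup J] [Module S J]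

theorem injective_torsionBySet [Module.Injective S J] :
    Module.Injective (S ⧸ P) (Submodule.torsionBySet S J P) := by
  refine Module.Baer.injective fun K g => ?_
  obtain ⟨h, hh⟩ := Module.Injective.extension_property S J K (S ⧸ P)
    (K.subtype.restrictScalars S) K.injective_subtype
    ((Submodule.torsionBySet S J P).subtype ∘ₗ g.restrictScalars S)
  have hmem (y : S ⧸ P) : h y ∈ Submodule.torsionBySet S J P := by
    rw [Submodule.mem_torsionBySet_iff]
    rintro ⟨a, ha⟩
    change a • h y = 0
    rw [← map_smul, Module.mem_annihilator.mp (Ideal.annihilator_quotient.ge ha), map_zero]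
  refine ⟨(h.codRestrict _ hmem).extendScalarsOfSurjective Ideal.Quotient.mk_surjective,
    fun x hx => Subtype.ext ?_⟩
  exact LinearMap.congr_fun hh ⟨x, hx⟩

/-- Evaluation at `1` identifies `Hom(S ⧸ P, J)` with the elements of `J` killed by `P`. -/
noncomputable def quotientHomEquivTorsionBySet :
    (S ⧸ P →ₗ[S] J) ≃ₗ[S] Submodule.torsionBySet S J P :=
  .ofBijective ((LinearMap.applyₗ (1 : S ⧸ P)).codRestrict _ fun φ => by
      rw [Submodule.mem_torsionBySet_iff]
      rintro ⟨a, ha⟩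
      change a • φ 1 = 0
      rw [← map_smul, Module.mem_annihilator.mp (Ideal.annihilator_quotient.ge ha), map_zero])
    ⟨fun φ ψ h => by
      ext
      exact congrArg Subtype.val h, fun ⟨y, hy⟩ => by
      rw [Submodule.mem_torsionBySet_iff] at hy
      exact ⟨P.liftQ (.toSpanSingleton S J y) fun a ha => hy ⟨a, ha⟩, Subtype.ext (one_smul S y)⟩⟩

end TorsionBySet

section FlatExt

variable {R : Type u} [CommRing R]

theorem lTensor_injective_of_flat_X₃ {T : ShortComplex (ModuleCat.{u} R)} (hT : T.ShortExact)
    [Module.Flat R T.X₃] (L : Type u) [AddCommGroup L] [Module R L] :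
    Function.Injective (T.f.hom.lTensor L) :=
  LinearMap.lTensor_injective_of_exact_of_flat T.g.hom hT.moduleCat_surjective_g T.f.hom
    hT.moduleCat_injective_f
    ((ShortComplex.ShortExact.moduleCat_exact_iff_function_exact T).mp hT.exact) L

theorem flat_X₁_of_shortExact {T : ShortComplex (ModuleCat.{u} R)} (hT : T.ShortExact)
    [Module.Flat R T.X₂] [Module.Flat R T.X₃] : Module.Flat R T.X₁ := by
  rw [Module.Flat.iff_rTensor_preserves_injective_linearMap'.{u, u, u}]
  intro N N' _ _ _ _ h hh
  have hcomm : T.f.hom.lTensor N' ∘ₗ h.rTensor T.X₁ = h.rTensor T.X₂ ∘ₗ T.f.hom.lTensor N := by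
    rw [LinearMap.lTensor_comp_rTensor, LinearMap.rTensor_comp_lTensor]
  refine Function.Injective.of_comp (f := T.f.hom.lTensor N') ?_
  rw [← LinearMap.coe_comp, hcomm]
  exact (Module.Flat.rTensor_preserves_injective_linearMap h hh).comp
    (lTensor_injective_of_flat_X₃ hT N)

theorem exists_extension_of_flat_X₃ (A : Type u) [CommRing A] [Algebra R A] {E : Type u}
    [AddCommGroup E] [Module R E] [Module A E] [IsScalarTower R A E] [Module.Injective A E]
    {T : ShortComplex (ModuleCat.{u} R)} (hT : T.ShortExact) [Module.Flat R T.X₃]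
    (φ : T.X₁ →ₗ[R] E) : ∃ ψ : T.X₂ →ₗ[R] E, ψ ∘ₗ T.f.hom = φ := by
  have hf : Function.Injective (T.f.hom.baseChange A) := lTensor_injective_of_flat_X₃ hT A
  obtain ⟨ψ, hψ⟩ := Module.Injective.extension_property A E _ _ _ hf (φ.liftBaseChange A)
  refine ⟨ψ.restrictScalars R ∘ₗ TensorProduct.mk R A T.X₂ 1, ?_⟩
  ext z
  simpa using LinearMap.congr_fun hψ (1 ⊗ₜ z)

theorem subsingleton_ext_succ_of_flat_of_injective (A : Type u) [CommRing A] [Algebra R A]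
    (E : Type u) [AddCommGroup E] [Module R E] [Module A E] [IsScalarTower R A E]
    [Module.Injective A E] (F : ModuleCat.{u} R) [hF : Module.Flat R F] (k : ℕ) :
    Subsingleton (Ext F (.of R E) (k + 1)) := by
  induction k generalizing F with
  | zero =>
    have hT := F.shortExact_projectiveShortComplex
    have : Module.Flat R F.projectiveShortComplex.X₃ := hF
    refine subsingleton_of_forall_eq 0 fun x => ?_
    obtain ⟨y, rfl⟩ := precomp_extClass_surjective_of_projective_X₂ (.of R E) hT 0 x
    obtain ⟨φ, rfl⟩ := (Ext.mk₀_bijective _ _).2 y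
    obtain ⟨ψ, hψ⟩ := exists_extension_of_flat_X₃ A hT φ.hom
    have hφ : F.projectiveShortComplex.f ≫ ModuleCat.ofHom ψ = φ := ModuleCat.hom_ext hψ
    change hT.extClass.comp (Ext.mk₀ φ) (add_comm 1 0) = 0
    rw [← hφ, ← Ext.mk₀_comp_mk₀, ← Ext.comp_assoc_of_third_deg_zero, hT.extClass_comp,
      Ext.zero_comp]
  | succ k ih =>
    have hT := F.shortExact_projectiveShortComplex
    have : Module.Flat R F.projectiveShortComplex.X₃ := hF
    have := ih _ (hF := flat_X₁_of_shortExact hT)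
    exact (precomp_extClass_surjective_of_projective_X₂ (.of R E) hT (k + 1)).subsingleton

theorem subsingleton_ext_tensor_succ_of_flat_of_injective (A : Type u) [CommRing A]
    [IsNoetherianRing A] [Algebra R A] (E : Type u) [AddCommGroup E] [Module R E] [Module A E]
    [IsScalarTower R A E] [Module.Injective A E] (F G : ModuleCat.{u} R) [Module.Flat R F]
    [Module.Flat R G] (k : ℕ) : Subsingleton (Ext F (.of R (G ⊗[R] E)) (k + 1)) := by
  have : Module.Injective A (E ⊗[A] (A ⊗[R] G)) := injective_tensorProduct_of_flat
  have := subsingleton_ext_succ_of_flat_of_injective A (E ⊗[A] (A ⊗[R] G)) F k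
  let e : G ⊗[R] E ≃ₗ[R] E ⊗[A] (A ⊗[R] G) := TensorProduct.comm R G E ≪≫ₗ
    ((AlgebraTensorModule.cancelBaseChange R A A E G).restrictScalars R).symm
  exact subsingleton_ext_of_retract (.ofIso e.toModuleIso) (k + 1)

end FlatExt

section TensorBaseChange

variable {S R : Type u} [CommRing S] [CommRing R] [Algebra S R]

variable (S) in
/-- The functor `N ↦ G ⊗ (R ⊗ N)` from modules over `S` to modules over the `S`-algebra `R`. When
`R = S ⧸ I` and `N` is killed by `I`, then `R ⊗ N` is `N` viewed as an `R`-module. -/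
noncomputable def tensorBaseChange (G : ModuleCat.{u} R) : ModuleCat.{u} S ⥤ ModuleCat.{u} R where
  obj N := .of R (G ⊗[R] (R ⊗[S] N))
  map f := ModuleCat.ofHom ((f.hom.baseChange R).lTensor G)
  map_id N := by
    rw [ModuleCat.hom_id, LinearMap.baseChange_id, LinearMap.lTensor_id, ModuleCat.ofHom_id]
  map_comp f g := by
    rw [ModuleCat.hom_comp, LinearMap.baseChange_comp, LinearMap.lTensor_comp, ModuleCat.ofHom_comp]

instance (G : ModuleCat.{u} R) : (tensorBaseChange S G).PreservesZeroMorphisms where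
  map_zero _ _ := by
    dsimp only [tensorBaseChange]
    rw [ModuleCat.hom_zero, LinearMap.baseChange_zero, LinearMap.lTensor_zero]
    rfl

variable {I : Ideal S}

theorem baseChange_quotient_injective {N N' : Type u} [AddCommGroup N] [Module S N]
    [AddCommGroup N'] [Module S N'] {f : N →ₗ[S] N'} (hf : Function.Injective f)
    (hI : I ≤ Module.annihilator S N') : Function.Injective (f.baseChange (S ⧸ I)) := by
  rw [injective_iff_map_eq_zero]
  intro z hz
  obtain ⟨y, rfl⟩ := (quotTensorEquivQuotSMul N I).symm.surjective z
  obtain ⟨x, rfl⟩ := Submodule.Quotient.mk_surjective _ y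
  rw [quotTensorEquivQuotSMul_symm_mk] at hz ⊢
  have hfx : f x ∈ I • (⊤ : Submodule S N') := by
    rw [← Submodule.Quotient.mk_eq_zero, ← quotTensorEquivQuotSMul_mk_one_tmul,
      ← f.baseChange_tmul, hz, map_zero]
  rw [Submodule.le_annihilator_iff.mp (hI.trans Submodule.annihilator_top.ge),
    Submodule.mem_bot] at hfx
  rw [hf (hfx.trans (map_zero f).symm), tmul_zero]

theorem shortExact_map_tensorBaseChange {T : ShortComplex (ModuleCat.{u} S)} (hT : T.ShortExact)
    (hI : I ≤ Module.annihilator S T.X₂) (G : ModuleCat.{u} (S ⧸ I)) [Module.Flat (S ⧸ I) G] :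
    (T.map (tensorBaseChange S G)).ShortExact := by
  have hg := LinearMap.lTensor_surjective (S ⧸ I) hT.moduleCat_surjective_g
  have hexact := lTensor_exact (S ⧸ I)
    ((ShortComplex.ShortExact.moduleCat_exact_iff_function_exact T).mp hT.exact)
    hT.moduleCat_surjective_g
  exact ModuleCat.shortComplex_shortExact _
    (lTensor_exact (f := T.f.hom.baseChange (S ⧸ I)) (g := T.g.hom.baseChange (S ⧸ I)) G hexact hg)
    (Module.Flat.lTensor_preserves_injective_linearMap _
      (baseChange_quotient_injective hT.moduleCat_injective_f hI))
    (LinearMap.lTensor_surjective (g := T.g.hom.baseChange (S ⧸ I)) G hg)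

end TensorBaseChange

/-- The class of `S`-modules `N` for which the groups `Ext^k(F, G ⊗ (R ⊗ N))`, with `F` and `G` flat
over the `S`-algebra `R`, vanish for all large `k`, uniformly in `F` and `G`. -/
def FlatExtBounded (S R : Type u) [CommRing S] [CommRing R] [Algebra S R] :
    ObjectProperty (ModuleCat.{u} S) :=
  fun N => ∃ n : ℕ, ∀ (F G : ModuleCat.{u} R) [Module.Flat R F] [Module.Flat R G], ∀ k > n,
    Subsingleton (Ext F ((tensorBaseChange S G).obj N) k)

section FlatExtBounded

variable {S : Type u} [CommRing S]

theorem isDevissageClass_flatExtBounded (I : Ideal S) :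
    IsDevissageClass I (FlatExtBounded S (S ⧸ I)) where
  containsZero := by
    refine ⟨.of S PUnit, ModuleCat.isZero_of_subsingleton _, 0, fun F G _ _ k _ => ?_⟩
    have hzero : Limits.IsZero ((tensorBaseChange S G).obj (.of S PUnit)) :=
      (tensorBaseChange S G).map_isZero (ModuleCat.isZero_of_subsingleton _)
    have := hzero.hasInjectiveDimensionLT_zero
    exact HasInjectiveDimensionLT.subsingleton _ 0 k (Nat.zero_le k) F
  isStableUnderRetracts := ⟨fun r ⟨n, hn⟩ => ⟨n, fun F G _ _ k hk =>
    have := hn F G k hk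
    subsingleton_ext_of_retract (r.map (tensorBaseChange S G)) k⟩⟩
  extension := fun hT hI ⟨n, hn⟩ ⟨m, hm⟩ => ⟨max n m, fun F G _ _ k hk =>
    subsingleton_ext_X₂_of_shortExact (shortExact_map_tensorBaseChange hT hI G)
      (hn F G k (by lia)) (hm F G k (by lia))⟩
  kernel := fun hT hI ⟨n, hn⟩ ⟨m, hm⟩ => ⟨max n (m + 1), fun F G _ _ k hk => by
    obtain ⟨k, rfl⟩ := Nat.exists_eq_succ_of_ne_zero (by lia : k ≠ 0)
    exact subsingleton_ext_X₁_succ_of_shortExact (shortExact_map_tensorBaseChange hT hI G)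
      (hn F G (k + 1) (by lia)) (hm F G k (by lia))⟩

theorem flatExtBounded_of_injective [IsNoetherianRing S] {I P : Ideal S} (hIP : I ≤ P) (E : Type u)
    [AddCommGroup E] [Module S E] [Module (S ⧸ P) E] [IsScalarTower S (S ⧸ P) E]
    [Module.Injective (S ⧸ P) E] : FlatExtBounded S (S ⧸ I) (.of S E) := by
  let _ : Algebra (S ⧸ I) (S ⧸ P) := (Ideal.Quotient.factor hIP).toAlgebra
  let _ : Module (S ⧸ I) E := .compHom E (algebraMap (S ⧸ I) (S ⧸ P))
  have : IsScalarTower (S ⧸ I) (S ⧸ P) E := .of_algebraMap_smul fun _ _ => rfl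
  have : IsScalarTower S (S ⧸ I) E := .of_algebraMap_smul (algebraMap_smul (S ⧸ P))
  have : CompatibleSMul S (S ⧸ I) (S ⧸ I) E :=
    .of_algebraMap_surjective _ _ Ideal.Quotient.mk_surjective
  refine ⟨0, fun F G _ _ k hk => ?_⟩
  obtain ⟨k, rfl⟩ := Nat.exists_eq_succ_of_ne_zero hk.ne'
  have := subsingleton_ext_tensor_succ_of_flat_of_injective (S ⧸ P) E F G k
  let e : G ⊗[S ⧸ I] ((S ⧸ I) ⊗[S] E) ≃ₗ[S ⧸ I] G ⊗[S ⧸ I] E :=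
    (lidOfCompatibleSMul S (S ⧸ I) E).lTensor G
  exact subsingleton_ext_of_retract (.ofIso e.toModuleIso) _

theorem flatExtBounded_ext_zero_of_injective [IsNoetherianRing S] {I P : Ideal S} (hIP : I ≤ P)
    (J : ModuleCat.{u} S) [Injective J] :
    FlatExtBounded S (S ⧸ I) (.of S (Ext (.of S (S ⧸ P)) J 0)) := by
  have := Module.injective_module_of_injective_object S J
  have := injective_torsionBySet P J
  let e : Ext (.of S (S ⧸ P)) J 0 ≃ₗ[S] Submodule.torsionBySet S J P :=
    Ext.linearEquiv₀ ≪≫ₗ ModuleCat.homLinearEquiv ≪≫ₗ quotientHomEquivTorsionBySet P J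
  exact (isDevissageClass_flatExtBounded I).of_linearEquiv e.symm
    (flatExtBounded_of_injective hIP _)

theorem exists_forall_subsingleton_ext_of_flat [IsNoetherianRing S] (I : Ideal S) (n : ℕ)
    [HasInjectiveDimensionLT (ModuleCat.of S S) (n + 1)] :
    ∃ m : ℕ, ∀ (F G : ModuleCat.{u} (S ⧸ I)) [Module.Flat (S ⧸ I) F] [Module.Flat (S ⧸ I) G],
      ∀ k > m, Subsingleton (Ext F G k) := by
  obtain ⟨m, hm⟩ := (isDevissageClass_flatExtBounded I).quotient n
    fun _ hIP J _ => flatExtBounded_ext_zero_of_injective hIP J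
  refine ⟨m, fun F G _ _ k hk => ?_⟩
  have : Subsingleton (Ext F (.of (S ⧸ I) (G ⊗[S ⧸ I] ((S ⧸ I) ⊗[S] (S ⧸ I)))) k) := hm F G k hk
  have : CompatibleSMul S (S ⧸ I) (S ⧸ I) (S ⧸ I) :=
    .of_algebraMap_surjective _ _ Ideal.Quotient.mk_surjective
  let e : G ⊗[S ⧸ I] ((S ⧸ I) ⊗[S] (S ⧸ I)) ≃ₗ[S ⧸ I] G :=
    (lidOfCompatibleSMul S (S ⧸ I) (S ⧸ I)).lTensor G ≪≫ₗ TensorProduct.rid (S ⧸ I) G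
  exact subsingleton_ext_of_retract (.ofIso e.symm.toModuleIso) k

end FlatExtBounded

section Dimension

variable {R : Type u} [CommRing R]

theorem hasProjectiveDimensionLT_of_forall_flat_subsingleton_ext (n : ℕ) (F : ModuleCat.{u} R)
    [hF : Module.Flat R F]
    (hExt : ∀ (G : ModuleCat.{u} R) [Module.Flat R G], Subsingleton (Ext F G (n + 1))) :
    HasProjectiveDimensionLT F (n + 1) := by
  induction n generalizing F with
  | zero =>
    have hT := F.shortExact_projectiveShortComplex
    have : Module.Flat R F.projectiveShortComplex.X₃ := hF
    have : Module.Flat R F.projectiveShortComplex.X₁ := flat_X₁_of_shortExact hT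
    have := hExt F.projectiveShortComplex.X₁
    obtain ⟨y, hy⟩ := Ext.covariant_sequence_exact₃ F hT (Ext.mk₀ (𝟙 F)) (zero_add 1)
      (Subsingleton.elim _ _)
    obtain ⟨s, rfl⟩ := (Ext.mk₀_bijective _ _).2 y
    rw [Ext.mk₀_comp_mk₀] at hy
    have r : Retract F F.projectiveShortComplex.X₂ :=
      ⟨s, F.projectiveShortComplex.g, (Ext.mk₀_bijective _ _).1 hy⟩
    exact projective_iff_hasProjectiveDimensionLT_one.mp r.projective
  | succ n ih =>
    have hT := F.shortExact_projectiveShortComplex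
    have : Module.Flat R F.projectiveShortComplex.X₃ := hF
    have : Module.Flat R F.projectiveShortComplex.X₁ := flat_X₁_of_shortExact hT
    refine (hT.hasProjectiveDimensionLT_X₃_iff n inferInstance).mpr (ih _ fun G _ => ?_)
    have := hExt G
    refine subsingleton_of_forall_eq 0 fun x => ?_
    obtain ⟨y, rfl⟩ := Ext.contravariant_sequence_exact₁ hT G x (add_comm 1 (n + 1))
      (Subsingleton.elim (α := Ext F G (n + 1 + 1)) _ _)
    rw [Ext.eq_zero_of_projective y, Ext.comp_zero]

namespace HasInjDimLE

variable {M : Type u} [AddCommGroup M] [Module R M]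

theorem injective_s2 (hM : HasInjDimLE R M 0) : Module.Injective R M := by
  obtain ⟨J, d, ι, hJ, hJ_zero, hι, hι_range, -⟩ := hM
  have := hJ 0
  have := hJ_zero 1 one_pos
  have hι_surj : Function.Surjective ι := by
    rw [← LinearMap.range_eq_top, hι_range, Subsingleton.elim (d 0) 0, LinearMap.ker_zero]
  exact .of_ringEquiv (.refl R) (LinearEquiv.ofBijective ι ⟨hι, hι_surj⟩).symm

theorem exists_shortExact {n : ℕ} (hM : HasInjDimLE R M (n + 1)) :
    ∃ (J C : ModuleCat.{u} R) (ι : M →ₗ[R] J) (π : J →ₗ[R] C), Module.Injective R J ∧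
      Function.Injective ι ∧ Function.Exact ι π ∧ Function.Surjective π ∧ HasInjDimLE R C n := by
  obtain ⟨J, d, ι, hJ, hJ_zero, hι, hι_range, hd⟩ := hM
  refine ⟨J 0, .of R (LinearMap.range (d 0)), ι, (d 0).rangeRestrict, hJ 0, hι, ?_,
    LinearMap.surjective_rangeRestrict _, fun i => J (i + 1), fun i => d (i + 1),
    (LinearMap.range (d 0)).subtype, fun i => hJ (i + 1), fun i hi => hJ_zero _ (by lia),
    Submodule.injective_subtype _, ?_, fun i => hd (i + 1)⟩
  · rw [LinearMap.exact_iff, LinearMap.ker_rangeRestrict, hι_range]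
  · rw [Submodule.range_subtype, hd 0]

theorem hasInjectiveDimensionLT {n : ℕ} (hM : HasInjDimLE R M n) :
    HasInjectiveDimensionLT (ModuleCat.of R M) (n + 1) := by
  induction n generalizing M with
  | zero =>
    exact injective_iff_hasInjectiveDimensionLT_one.mp
      ((Module.injective_iff_injective_object R M).mp hM.injective_s2)
  | succ n ih =>
    obtain ⟨J, C, ι, π, hJ, hι, hιπ, hπ, hC⟩ := hM.exists_shortExact
    let T := ModuleCat.shortComplexOfCompEqZero ι π hιπ.linearMap_comp_eq_zero
    have hT : T.ShortExact := ModuleCat.shortComplex_shortExact T hιπ hι hπ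
    exact (hT.hasInjectiveDimensionLT_X₃_iff n
      ((Module.injective_iff_injective_object R J).mp hJ)).mp (ih hC)

end HasInjDimLE

namespace HasFlatDimLE

variable {M : Type u} [AddCommGroup M] [Module R M]

theorem flat_s2 (hM : HasFlatDimLE R M 0) : Module.Flat R M := by
  obtain ⟨F, d, ε, hF, hF_zero, hε, hε_ker, -⟩ := hM
  have := hF 0
  have := hF_zero 1 one_pos
  have hε_inj : Function.Injective ε := by
    rw [← LinearMap.ker_eq_bot, ← hε_ker, Subsingleton.elim (d 0) 0, LinearMap.range_zero]
  exact .of_linearEquiv (LinearEquiv.ofBijective ε ⟨hε_inj, hε⟩).symm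

theorem exists_surjective {n : ℕ} (hM : HasFlatDimLE R M (n + 1)) :
    ∃ (F : ModuleCat.{u} R) (ε : F →ₗ[R] M), Module.Flat R F ∧ Function.Surjective ε ∧
      HasFlatDimLE R (LinearMap.ker ε) n := by
  obtain ⟨F, d, ε, hF, hF_zero, hε, hε_ker, hd⟩ := hM
  have hd_mem (x) : d 0 x ∈ LinearMap.ker ε := hε_ker.le ⟨x, rfl⟩
  refine ⟨F 0, ε, hF 0, hε, fun i => F (i + 1), fun i => d (i + 1), (d 0).codRestrict _ hd_mem,
    fun i => hF (i + 1), fun i hi => hF_zero _ (by lia), ?_, ?_, fun i => hd (i + 1)⟩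
  · rw [← LinearMap.range_eq_top, LinearMap.range_codRestrict, hε_ker, Submodule.comap_subtype_self]
  · rw [LinearMap.ker_codRestrict, hd 0]

theorem hasProjectiveDimensionLT {m n : ℕ} (hM : HasFlatDimLE R M n)
    (hflat : ∀ (F : ModuleCat.{u} R) [Module.Flat R F], HasProjectiveDimensionLT F (m + 1)) :
    HasProjectiveDimensionLT (ModuleCat.of R M) (m + n + 1) := by
  induction n generalizing M with
  | zero =>
    have := hM.flat_s2
    exact hflat (.of R M)
  | succ n ih =>
    obtain ⟨F, ε, _, hε, hker⟩ := hM.exists_surjective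
    have := hflat F
    let T := ModuleCat.shortComplexOfCompEqZero (LinearMap.ker ε).subtype ε
      ε.exact_subtype_ker_map.linearMap_comp_eq_zero
    have hT : T.ShortExact := ModuleCat.shortComplex_shortExact T ε.exact_subtype_ker_map
      (Submodule.injective_subtype _) hε
    exact hT.hasProjectiveDimensionLT_X₃ (m + n + 1) (ih hker)
      (hasProjectiveDimensionLT_of_ge F (m + 1) (m + n + 1 + 1) (by lia))

end HasFlatDimLE

namespace HasProjDimLE

variable {M : Type u} [AddCommGroup M] [Module R M]

theorem of_projective_s2 [Module.Projective R M] : HasProjDimLE R M 0 := by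
  refine ⟨fun | 0 => .of R M | _ + 1 => .of R PUnit.{u + 1}, fun _ => 0, .id, ?_, ?_,
    Function.surjective_id, ?_, fun i => ?_⟩
  · rintro (_ | i)
    · assumption
    · exact inferInstanceAs (Module.Projective R PUnit.{u + 1})
  · rintro (_ | i) hi
    · exact absurd hi (lt_irrefl 0)
    · exact inferInstanceAs (Subsingleton PUnit.{u + 1})
  · rw [LinearMap.range_zero, LinearMap.ker_id]
  · exact Subsingleton.elim (α := Submodule R PUnit.{u + 1}) _ _

theorem succ_of_surjective {n : ℕ} {L : Type u} [AddCommGroup L] [Module R L]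
    [Module.Projective R L] {g : L →ₗ[R] M} (hg : Function.Surjective g)
    (hker : HasProjDimLE R (LinearMap.ker g) n) :
    HasProjDimLE R M (n + 1) := by
  obtain ⟨P, d, ε, hP, hP_zero, hε, hε_ker, hd⟩ := hker
  let P' : ℕ → ModuleCat.{u} R
    | 0 => .of R L
    | i + 1 => P i
  let d' : ∀ i, P' (i + 1) →ₗ[R] P' i
    | 0 => (LinearMap.ker g).subtype ∘ₗ ε
    | i + 1 => d i
  refine ⟨P', d', g, ?_, ?_, hg, ?_, ?_⟩
  · rintro (_ | i)
    · assumption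
    · exact hP i
  · rintro (_ | i) hi
    · exact absurd hi (Nat.not_lt_zero _)
    · exact hP_zero i (Nat.succ_lt_succ_iff.mp hi)
  · change LinearMap.range ((LinearMap.ker g).subtype ∘ₗ ε) = LinearMap.ker g
    rw [LinearMap.range_comp, LinearMap.range_eq_top.mpr hε, Submodule.map_subtype_top]
  · rintro (_ | i)
    · change LinearMap.range (d 0) = LinearMap.ker ((LinearMap.ker g).subtype ∘ₗ ε)
      rw [LinearMap.ker_comp_of_ker_eq_bot _ (Submodule.ker_subtype _), hε_ker]
    · exact hd i

theorem of_hasProjectiveDimensionLT {n : ℕ}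
    (hM : HasProjectiveDimensionLT (ModuleCat.of R M) (n + 1)) : HasProjDimLE R M n := by
  induction n generalizing M with
  | zero =>
    have : Module.Projective R M :=
      (IsProjective.iff_projective M).mpr
        (projective_iff_hasProjectiveDimensionLT_one.mpr hM)
    exact of_projective_s2
  | succ n ih =>
    have hT := (ModuleCat.of R M).shortExact_projectiveShortComplex
    exact succ_of_surjective hT.moduleCat_surjective_g
      (ih ((hT.hasProjectiveDimensionLT_X₃_iff n inferInstance).mp hM))

end HasProjDimLE

end Dimension

/-- Over a homomorphic image `R = S ⧸ I` of a commutative Noetherian ring `S` of finite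
self-injective dimension, every `R`-module of finite flat dimension has finite
projective dimension. -/
theorem finite_projDim_of_finite_flatDim_over_quotient_of_gorenstein
    (S : Type u) [CommRing S] [IsNoetherianRing S]
    (hS : ∃ d : ℕ, HasInjDimLE S S d)
    (I : Ideal S)
    (M : Type u) [AddCommGroup M] [Module (S ⧸ I) M]
    (hM : ∃ n : ℕ, HasFlatDimLE (S ⧸ I) M n) :
    ∃ m : ℕ, HasProjDimLE (S ⧸ I) M m := by
  obtain ⟨d, hd⟩ := hS
  obtain ⟨n, hn⟩ := hM
  have := hd.hasInjectiveDimensionLT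
  obtain ⟨m, hm⟩ := exists_forall_subsingleton_ext_of_flat I d
  have hflat (F : ModuleCat.{u} (S ⧸ I)) [Module.Flat (S ⧸ I) F] :
      HasProjectiveDimensionLT F (m + 1) :=
    hasProjectiveDimensionLT_of_forall_flat_subsingleton_ext m F
      fun G _ => hm F G (m + 1) m.lt_succ_self
  exact ⟨m + n, .of_hasProjectiveDimensionLT (hn.hasProjectiveDimensionLT hflat)⟩
end
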